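/- arXiv:2008.12944 — 2 statements merged into one kernel-verified Lean document; each statement's English description precedes it below -/
import Mathlib

section
/- Let k be an algebraically closed field and S = k[x_1,...,x_r]. Suppose D = (p_{ij}) is an 8×8 matrix with entries in S satisfying the standard conditions, and suppose moreover that either: (A) p_{ij} = 0 unless (i = 1 and 2 ≤ j ≤ 8) or (2 ≤ i ≤ 5 and 6 ≤ j ≤ 8); or (B) p_{ij} = 0 unless (1 ≤ i ≤ 3 and 4 ≤ j ≤ 8) or (4 ≤ i ≤ 7 and j = 8). Then r < 3, i.e., r ≤ 2. -/
open MvPolynomial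

/-- The "standard conditions" on an `8 × 8` matrix `D = (p_{ij})` with entries in
`S = k[x_1, ..., x_r]`:
(1) `D` is strictly upper triangular;
(2) `D² = 0`;
(3) every entry vanishes at the origin;
(4) for every nonzero point `a ∈ k^r` the evaluated matrix `D(a)` has rank `4`;
(5) there is a nonincreasing `8`-tuple of integers `(d_1, ..., d_8)` such that each `p_{ij}`
is homogeneous of degree `d_i - d_j + 1` (the zero polynomial being homogeneous of
any degree). -/
def StandardConditions {k : Type*} [Field k] {r : ℕ}
    (D : Matrix (Fin 8) (Fin 8) (MvPolynomial (Fin r) k)) : Prop :=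
  (∀ i j : Fin 8, j ≤ i → D i j = 0) ∧
  D * D = 0 ∧
  (∀ i j : Fin 8, eval (0 : Fin r → k) (D i j) = 0) ∧
  (∀ a : Fin r → k, a ≠ 0 → (D.map (eval a)).rank = 4) ∧
  (∃ d : Fin 8 → ℤ, Antitone d ∧
    ∀ i j : Fin 8, D i j = 0 ∨
      (0 ≤ d i - d j + 1 ∧ (D i j).IsHomogeneous (d i - d j + 1).toNat))

/-- Nullstellensatz consequence. -/
lemma X_pow_mem_of_locus {k : Type*} [Field k] [IsAlgClosed k] {r : ℕ}
    (I : Ideal (MvPolynomial (Fin r) k))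
    (hI : ∀ a : Fin r → k, a ≠ 0 → ∃ f ∈ I, eval a f ≠ 0) (i : Fin r) :
    ∃ n : ℕ, (X i : MvPolynomial (Fin r) k) ^ n ∈ I := by
  have h : (X i : MvPolynomial (Fin r) k) ∈ I.radical := by
    rw [← vanishingIdeal_zeroLocus_eq_radical (K := k) I, mem_vanishingIdeal_iff]
    intro a ha
    by_cases h0 : a = 0
    · simp [h0]
    · obtain ⟨f, hf, hne⟩ := hI a h0
      exact absurd (by simpa [aeval_eq_eval] using ha f hf) hne
  exact h

lemma socle_step {R : Type*} [CommRing R] (I : Ideal R) (x f : R) (hf : f ∉ I)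
    (hx : ∃ n : ℕ, x ^ n ∈ I) : ∃ n : ℕ, x ^ n * f ∉ I ∧ x * (x ^ n * f) ∈ I := by
  classical
  have hex : ∃ n : ℕ, x ^ n * f ∈ I := by
    obtain ⟨n, hn⟩ := hx
    exact ⟨n, I.mul_mem_right _ hn⟩
  have hs := Nat.find_spec hex
  have hm := fun m => Nat.find_min hex (m := m)
  generalize Nat.find hex = n at hs hm
  cases n with
  | zero => simp at hs; exact absurd hs hf
  | succ n =>
    refine ⟨n, hm n (Nat.lt_succ_self n), ?_⟩
    rw [← mul_assoc, ← pow_succ']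
    exact hs

lemma exists_socle {R : Type*} [CommRing R] (I : Ideal R) (hI : (1 : R) ∉ I) (x y z : R)
    (hx : ∃ n : ℕ, x ^ n ∈ I) (hy : ∃ n : ℕ, y ^ n ∈ I) (hz : ∃ n : ℕ, z ^ n ∈ I) :
    ∃ f : R, f ∉ I ∧ x * f ∈ I ∧ y * f ∈ I ∧ z * f ∈ I := by
  obtain ⟨a, ha, ha'⟩ := socle_step I x 1 hI hx
  obtain ⟨b, hb, hb'⟩ := socle_step I y _ ha hy
  obtain ⟨c, hc, hc'⟩ := socle_step I z _ hb hz
  refine ⟨_, hc, ?_, ?_, hc'⟩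
  · have := I.mul_mem_left (z ^ c * y ^ b) ha'
    convert this using 1; ring
  · have := I.mul_mem_left (z ^ c) hb'
    convert this using 1; ring

lemma X_dvd_sub_restrict {k : Type*} [Field k] {r : ℕ} (i : Fin r)
    (f : MvPolynomial (Fin r) k) :
    (X i : MvPolynomial (Fin r) k) ∣ f - aeval (Function.update X i 0) f := by
  induction f using MvPolynomial.induction_on with
  | C a => simp
  | add p q hp hq =>
    rw [map_add, add_sub_add_comm]
    exact dvd_add hp hq
  | mul_X p j hp =>
    rw [map_mul, aeval_X]
    by_cases h : j = i
    · subst h; simp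
    · rw [Function.update_of_ne h, ← sub_mul]
      exact hp.mul_right _

lemma X_not_dvd {k : Type*} [Field k] {r : ℕ} {i j : Fin r} (h : i ≠ j) :
    ¬ (X i : MvPolynomial (Fin r) k) ∣ X j := by
  rw [X_dvd_X]; exact h

lemma coprime_pow_cancel {k : Type*} [Field k] {r : ℕ} {i j : Fin r} (h : i ≠ j) (m n : ℕ)
    (a b : MvPolynomial (Fin r) k) (hab : X i ^ m * a = X j ^ n * b) :
    ∃ c, a = X j ^ n * c ∧ b = X i ^ m * c := by
  have hd : (X j : MvPolynomial (Fin r) k) ^ n ∣ a := by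
    refine (X_prime (i := j)).pow_dvd_of_dvd_mul_left n (a := X i ^ m) ?_ ⟨b, hab⟩
    intro hh
    exact X_not_dvd h.symm ((X_prime (i := j)).dvd_of_dvd_pow hh)
  obtain ⟨c, rfl⟩ := hd
  refine ⟨c, rfl, ?_⟩
  have hx : (X j : MvPolynomial (Fin r) k) ^ n ≠ 0 := pow_ne_zero _ (X_ne_zero j)
  apply mul_left_cancel₀ hx
  rw [← hab]; ring

lemma koszul_exact {k : Type*} [Field k] {r : ℕ} {i j l : Fin r} (hij : i ≠ j) (hil : i ≠ l)
    (hjl : j ≠ l) (a b c : MvPolynomial (Fin r) k)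
    (h : X i * c - X j * b + X l * a = 0) :
    ∃ p q s, a = X i * q - X j * p ∧ b = X i * s - X l * p ∧ c = X j * s - X l * q := by
  have h1 := congrArg (aeval (Function.update X l 0 : Fin r → MvPolynomial (Fin r) k)) h
  simp only [map_add, map_sub, map_mul, aeval_X, Function.update_of_ne hil,
    Function.update_of_ne hjl, Function.update_self, map_zero, zero_mul, add_zero] at h1
  obtain ⟨u, hu⟩ := X_dvd_sub_restrict l c
  obtain ⟨w, hw⟩ := X_dvd_sub_restrict l b
  obtain ⟨g, hg1, hg2⟩ := coprime_pow_cancel hij 1 1 _ _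
    (by rw [pow_one, pow_one]; exact sub_eq_zero.mp h1)
  rw [hg1, pow_one] at hu
  rw [hg2, pow_one] at hw
  refine ⟨-w, -u, g, ?_, ?_, ?_⟩
  · apply mul_left_cancel₀ (X_ne_zero (R := k) l)
    linear_combination h - X i * hu + X j * hw
  · linear_combination hw
  · linear_combination hu

open Matrix in
/-- Local solvability: near `a`, some polynomial `δ` with `δ(a) ≠ 0` makes `M` split. -/
lemma local_split {k : Type*} [Field k] {r : ℕ}
    (M : Matrix (Fin 3 ⊕ Fin 1) (Fin 3) (MvPolynomial (Fin r) k))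
    (v : Fin 3 ⊕ Fin 1 → MvPolynomial (Fin r) k) (hvM : v ᵥ* M = 0) (a : Fin r → k)
    (hv : ∃ i, eval a (v i) ≠ 0)
    (hM : ∃ L : Matrix (Fin 3) (Fin 3 ⊕ Fin 1) k, L * M.map (eval a) = 1) :
    ∃ δ : MvPolynomial (Fin r) k, eval a δ ≠ 0 ∧ (∀ t, M *ᵥ t = 0 → t = 0) ∧
      ∀ s, v ⬝ᵥ s = 0 → ∃ t, M *ᵥ t = δ • s := by
  obtain ⟨L, hL⟩ := hM
  obtain ⟨i₀, hi₀⟩ := hv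
  set L' : Matrix (Fin 3) (Fin 3 ⊕ Fin 1) (MvPolynomial (Fin r) k) := L.map C with hL'
  have hL'e : L'.map (eval a) = L := by ext i j; simp [hL']
  have hNe : (L' * M).map (eval a) = 1 := by
    rw [Matrix.map_mul, hL'e, hL]
  have hδ : eval a (L' * M).det = 1 := by
    rw [RingHom.map_det, RingHom.mapMatrix_apply, hNe, det_one]
  have hδ0 : (L' * M).det ≠ 0 := by
    intro h; rw [h] at hδ; simp at hδ
  set B : Matrix (Fin 3 ⊕ Fin 1) (Fin 3 ⊕ Fin 1) (MvPolynomial (Fin r) k) :=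
    fromRows L' (replicateRow (Fin 1) v) with hB
  have hBe : eval a B.det ≠ 0 := by
    rw [RingHom.map_det, RingHom.mapMatrix_apply]
    have h1 : B.map (eval a) = fromRows L (replicateRow (Fin 1) (fun i => eval a (v i))) := by
      ext i j
      rcases i with i | i
      · simp [hB, ← hL'e]
      · simp [hB]
    set y : Matrix (Fin 3 ⊕ Fin 1) (Fin 1) k :=
      Matrix.of fun i _ => if i = i₀ then (eval a (v i₀))⁻¹ else 0 with hy
    have h2 : B.map (eval a) * fromCols (M.map (eval a)) y
        = fromBlocks 1 (L * y) 0 1 := by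
      rw [h1, fromRows_mul_fromCols, hL]
      congr 1
      · ext i j
        have := congrArg (eval a) (congrFun hvM j)
        simpa [vecMul, dotProduct, Matrix.mul_apply] using this
      · ext i j
        have : i = j := Subsingleton.elim _ _
        subst this
        rw [Matrix.mul_apply, Finset.sum_eq_single i₀]
        · simp [hy, hi₀]
        · intro b _ hb; simp [hy, hb]
        · simp
    intro h0
    have h3 := congrArg det h2
    rw [det_mul, h0, zero_mul, det_fromBlocks_zero₂₁] at h3
    simp at h3
  have hB0 : B.det ≠ 0 := by
    intro h; rw [h] at hBe; simp at hBe
  refine ⟨(L' * M).det, by rw [hδ]; exact one_ne_zero, ?_, ?_⟩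
  · intro t ht
    apply eq_zero_of_mulVec_eq_zero hδ0
    rw [← mulVec_mulVec, ht, mulVec_zero]
  · intro s hs
    refine ⟨(L' * M).adjugate *ᵥ (L' *ᵥ s), ?_⟩
    rw [← sub_eq_zero]
    apply eq_zero_of_mulVec_eq_zero hB0
    rw [hB, fromRows_mulVec]
    have e1 : L' *ᵥ (M *ᵥ ((L' * M).adjugate *ᵥ (L' *ᵥ s)) - (L' * M).det • s) = 0 := by
      rw [mulVec_sub, mulVec_mulVec, mulVec_mulVec, mul_adjugate, mulVec_smul, smul_mulVec,
        one_mulVec, sub_self]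
    have e2 : v ⬝ᵥ (M *ᵥ ((L' * M).adjugate *ᵥ (L' *ᵥ s)) - (L' * M).det • s) = 0 := by
      rw [dotProduct_sub, dotProduct_mulVec, hvM, zero_dotProduct, dotProduct_smul, hs]
      simp
    rw [e1]
    ext1 i
    rcases i with i | i
    · simp
    · exact e2

open Matrix in
lemma global_exact {k : Type*} [Field k] [IsAlgClosed k] {r : ℕ} {x y : Fin r} (hxy : x ≠ y)
    (M : Matrix (Fin 3 ⊕ Fin 1) (Fin 3) (MvPolynomial (Fin r) k))
    (v : Fin 3 ⊕ Fin 1 → MvPolynomial (Fin r) k)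
    (hinj : ∀ t, M *ᵥ t = 0 → t = 0)
    (hloc : ∀ a : Fin r → k, a ≠ 0 → ∃ δ : MvPolynomial (Fin r) k, eval a δ ≠ 0 ∧
      ∀ s, v ⬝ᵥ s = 0 → ∃ t, M *ᵥ t = δ • s)
    (s : Fin 3 ⊕ Fin 1 → MvPolynomial (Fin r) k) (hs : v ⬝ᵥ s = 0) : ∃ t, M *ᵥ t = s := by
  let J : Ideal (MvPolynomial (Fin r) k) :=
    { carrier := {δ | ∃ t, M *ᵥ t = δ • s}
      add_mem' := by
        rintro p q ⟨t, ht⟩ ⟨u, hu⟩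
        exact ⟨t + u, by rw [mulVec_add, ht, hu, add_smul]⟩
      zero_mem' := ⟨0, by simp⟩
      smul_mem' := by
        rintro c p ⟨t, ht⟩
        exact ⟨c • t, by rw [mulVec_smul, ht, smul_assoc]⟩ }
  have hJ : ∀ a : Fin r → k, a ≠ 0 → ∃ f ∈ J, eval a f ≠ 0 := by
    intro a ha
    obtain ⟨δ, h1, h2⟩ := hloc a ha
    exact ⟨δ, h2 s hs, h1⟩
  obtain ⟨m, t, ht⟩ := X_pow_mem_of_locus J hJ x
  obtain ⟨n, u, hu⟩ := X_pow_mem_of_locus J hJ y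
  have h0 : (X y : MvPolynomial (Fin r) k) ^ n • t - (X x : MvPolynomial (Fin r) k) ^ m • u = 0 := by
    apply hinj
    rw [mulVec_sub, mulVec_smul, mulVec_smul, ht, hu, smul_comm, sub_self]
  have h1 : ∀ i, ∃ c, t i = X x ^ m * c := by
    intro i
    have := congrFun h0 i
    simp only [Pi.sub_apply, Pi.smul_apply, smul_eq_mul, Pi.zero_apply] at this
    obtain ⟨c, hc, _⟩ := coprime_pow_cancel hxy.symm n m _ _ (sub_eq_zero.mp this)
    exact ⟨c, hc⟩
  choose c hc using h1
  refine ⟨c, ?_⟩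
  have htc : t = (X x : MvPolynomial (Fin r) k) ^ m • c := by
    ext1 i; simpa using hc i
  rw [htc, mulVec_smul] at ht
  exact smul_right_injective _ (pow_ne_zero m (X_ne_zero (R := k) x)) ht

open Matrix in
lemma core_false {k : Type*} [Field k] [IsAlgClosed k] {r : ℕ} (h3 : 3 ≤ r)
    (M : Matrix (Fin 3 ⊕ Fin 1) (Fin 3) (MvPolynomial (Fin r) k))
    (v : Fin 3 ⊕ Fin 1 → MvPolynomial (Fin r) k) (hvM : v ᵥ* M = 0)
    (hv0 : ∀ i, eval 0 (v i) = 0)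
    (hv : ∀ a : Fin r → k, a ≠ 0 → ∃ i, eval a (v i) ≠ 0)
    (hM : ∀ a : Fin r → k, a ≠ 0 →
      ∃ L : Matrix (Fin 3) (Fin 3 ⊕ Fin 1) k, L * M.map (eval a) = 1) : False := by
  obtain ⟨x, y, z, hxy, hxz, hyz⟩ : ∃ x y z : Fin r, x ≠ y ∧ x ≠ z ∧ y ≠ z :=
    ⟨⟨0, by omega⟩, ⟨1, by omega⟩, ⟨2, by omega⟩, by simp, by simp, by simp⟩
  have hinj : ∀ t, M *ᵥ t = 0 → t = 0 := by
    have ha : (Pi.single x 1 : Fin r → k) ≠ 0 := by simp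
    obtain ⟨_, _, h, _⟩ := local_split M v hvM _ (hv _ ha) (hM _ ha)
    exact h
  have hex : ∀ s, v ⬝ᵥ s = 0 → ∃ t, M *ᵥ t = s := by
    refine global_exact hxy M v hinj ?_
    intro a ha
    obtain ⟨δ, h1, _, h2⟩ := local_split M v hvM _ (hv _ ha) (hM _ ha)
    exact ⟨δ, h1, h2⟩
  let I : Ideal (MvPolynomial (Fin r) k) :=
    { carrier := {f | ∃ s, v ⬝ᵥ s = f}
      add_mem' := by
        rintro p q ⟨t, ht⟩ ⟨u, hu⟩
        exact ⟨t + u, by rw [dotProduct_add, ht, hu]⟩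
      zero_mem' := ⟨0, by simp⟩
      smul_mem' := by
        rintro c p ⟨t, ht⟩
        exact ⟨c • t, by rw [dotProduct_smul, ht]⟩ }
  have hI1 : (1 : MvPolynomial (Fin r) k) ∉ I := by
    rintro ⟨s, hs⟩
    have := congrArg (eval 0) hs
    rw [dotProduct, map_sum, Finset.sum_eq_zero (fun i _ => by rw [map_mul, hv0, zero_mul])] at this
    simp at this
  have hI : ∀ a : Fin r → k, a ≠ 0 → ∃ f ∈ I, eval a f ≠ 0 := by
    intro a ha
    obtain ⟨i, hi⟩ := hv a ha
    exact ⟨v i, ⟨Pi.single i 1, by simp⟩, hi⟩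
  obtain ⟨f, hf, ⟨sx, hsx⟩, ⟨sy, hsy⟩, ⟨sz, hsz⟩⟩ := exists_socle I hI1 (X x) (X y) (X z)
    (X_pow_mem_of_locus I hI x) (X_pow_mem_of_locus I hI y) (X_pow_mem_of_locus I hI z)
  have key : ∀ (p q : MvPolynomial (Fin r) k) (s t : Fin 3 ⊕ Fin 1 → MvPolynomial (Fin r) k),
      v ⬝ᵥ s = p * f → v ⬝ᵥ t = q * f → ∃ u, M *ᵥ u = p • t - q • s := by
    intro p q s t h1 h2
    apply hex
    rw [dotProduct_sub, dotProduct_smul, dotProduct_smul, h1, h2, smul_eq_mul, smul_eq_mul]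
    ring
  obtain ⟨a, ha⟩ := key _ _ _ _ hsx hsy
  obtain ⟨b, hb⟩ := key _ _ _ _ hsx hsz
  obtain ⟨c, hc⟩ := key _ _ _ _ hsy hsz
  have hK : (X x : MvPolynomial (Fin r) k) • c - (X y : MvPolynomial (Fin r) k) • b
      + (X z : MvPolynomial (Fin r) k) • a = 0 := by
    apply hinj
    rw [mulVec_add, mulVec_sub, mulVec_smul, mulVec_smul, mulVec_smul, ha, hb, hc]
    ext1 i
    simp only [Pi.add_apply, Pi.sub_apply, Pi.smul_apply, smul_eq_mul, Pi.zero_apply]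
    ring
  have hK' : ∀ i, ∃ p q s, a i = X x * q - X y * p ∧ b i = X x * s - X z * p ∧
      c i = X y * s - X z * q := by
    intro i
    apply koszul_exact hxy hxz hyz
    simpa using congrFun hK i
  choose p q s hp hq _ using hK'
  have ha' : a = (X x : MvPolynomial (Fin r) k) • q - (X y : MvPolynomial (Fin r) k) • p := by
    ext1 i; simpa using hp i
  rw [ha', mulVec_sub, mulVec_smul, mulVec_smul] at ha
  have hσ : ∀ i, ∃ d, (sx - M *ᵥ p) i = X x * d := by
    intro i
    have := congrFun ha i
    simp only [Pi.sub_apply, Pi.smul_apply, smul_eq_mul] at this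
    obtain ⟨d, hd, _⟩ := coprime_pow_cancel hxy.symm 1 1 ((sx - M *ᵥ p) i) ((sy - M *ᵥ q) i)
      (by simp only [Pi.sub_apply]; linear_combination this)
    exact ⟨d, by rw [hd, pow_one]⟩
  choose σ hσ using hσ
  apply hf
  refine ⟨σ, ?_⟩
  apply mul_left_cancel₀ (X_ne_zero (R := k) x)
  have : sx - M *ᵥ p = (X x : MvPolynomial (Fin r) k) • σ := by
    ext1 i; simpa using hσ i
  rw [← hsx, ← smul_eq_mul, ← dotProduct_smul, ← this, dotProduct_sub, dotProduct_mulVec, hvM,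
    zero_dotProduct, sub_zero]

open Matrix in
lemma left_inverse_of_rank {k m : Type*} [Field k] [Fintype m] [DecidableEq m]
    (A : Matrix m (Fin 3) k) (h : 3 ≤ A.rank) : ∃ L : Matrix (Fin 3) m k, L * A = 1 := by
  rw [← vecMul_surjective_iff_exists_left_inverse]
  have h1 : LinearMap.range (Aᵀ).mulVecLin = ⊤ := by
    apply Submodule.eq_top_of_finrank_eq
    have h2 : Aᵀ.rank ≤ 3 := by simpa using rank_le_card_height Aᵀ
    have h3 := rank_transpose A
    have h4 : Module.finrank k (LinearMap.range (Aᵀ).mulVecLin) = Aᵀ.rank := rfl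
    rw [h4]; simp; omega
  intro y
  obtain ⟨x, hx⟩ := LinearMap.range_eq_top.mp h1 y
  exact ⟨x, by simpa [mulVec_transpose] using hx⟩

open Matrix in
lemma rank_add_le_add {k m n : Type*} [Field k] [Fintype m] [Fintype n]
    (A B : Matrix m n k) : (A + B).rank ≤ A.rank + B.rank := by
  have h : LinearMap.range (A + B).mulVecLin ≤
      LinearMap.range A.mulVecLin ⊔ LinearMap.range B.mulVecLin := by
    rw [mulVecLin_add]; exact LinearMap.range_add_le _ _
  exact (Submodule.finrank_mono h).trans (Submodule.finrank_add_le_finrank_add_finrank _ _)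

/-- Row indices of the middle block. -/
def rowIdx : Fin 3 ⊕ Fin 1 → Fin 8 := Sum.elim ![1, 2, 3] ![4]

/-- Column indices of the last block. -/
def colIdx : Fin 3 → Fin 8 := ![5, 6, 7]

open Matrix in
lemma blocks_of_rank {k : Type*} [Field k] (E : Matrix (Fin 8) (Fin 8) k)
    (hz : ∀ i j : Fin 8, ¬((i = 0 ∧ 1 ≤ j) ∨ (1 ≤ i ∧ i ≤ 4 ∧ 5 ≤ j)) → E i j = 0)
    (hr : E.rank = 4) :
    (∃ i, E 0 (rowIdx i) ≠ 0) ∧ 3 ≤ (E.submatrix rowIdx colIdx).rank := by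
  constructor
  · by_contra! h
    have e : E = E.submatrix id colIdx * (1 : Matrix (Fin 8) (Fin 8) k).submatrix colIdx id := by
      have c : ∀ i j : Fin 8, j ≤ 4 → E i j = 0 := by
        intro i j hj
        by_cases hi : i = 0 ∧ 1 ≤ j
        · obtain ⟨rfl, hj1⟩ := hi
          have : ∃ l, rowIdx l = j := by revert j; decide
          obtain ⟨l, rfl⟩ := this
          exact h l
        · apply hz; omega
      ext i j
      rw [Matrix.mul_apply, Fin.sum_univ_three]
      fin_cases j <;> simp [colIdx, Matrix.one_apply] <;> exact c _ _ (by decide)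
    have h1 := rank_mul_le_left (E.submatrix id colIdx)
      ((1 : Matrix (Fin 8) (Fin 8) k).submatrix colIdx id)
    rw [← e, hr] at h1
    have h2 := rank_le_card_width (E.submatrix id colIdx)
    simp at h2
    omega
  · have e : E = vecMulVec (Pi.single 0 1) (E 0) +
        (1 : Matrix (Fin 8) (Fin 8) k).submatrix id rowIdx *
          (E.submatrix rowIdx colIdx * (1 : Matrix (Fin 8) (Fin 8) k).submatrix colIdx id) := by
      ext i j
      rw [Matrix.add_apply, Matrix.mul_apply, Fintype.sum_sum_type, Fin.sum_univ_three,
        Fin.sum_univ_one]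
      simp only [Matrix.mul_apply, Fin.sum_univ_three]
      by_cases hi : i = 0
      · subst hi
        simp [rowIdx, colIdx, Matrix.one_apply, vecMulVec_apply]
      · by_cases hj : (1 ≤ i ∧ i ≤ 4 ∧ 5 ≤ j)
        · have hi' : i = 1 ∨ i = 2 ∨ i = 3 ∨ i = 4 := by omega
          have hj' : j = 5 ∨ j = 6 ∨ j = 7 := by omega
          rcases hi' with rfl | rfl | rfl | rfl <;> rcases hj' with rfl | rfl | rfl <;>
            simp [rowIdx, colIdx, Matrix.one_apply, vecMulVec_apply]
        · rw [hz i j (by omega)]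
          have hj' : i = 5 ∨ i = 6 ∨ i = 7 ∨ j ≤ 4 := by omega
          rcases hj' with rfl | rfl | rfl | h
          · simp [rowIdx, Matrix.one_apply, vecMulVec_apply]
          · simp [rowIdx, Matrix.one_apply, vecMulVec_apply]
          · simp [rowIdx, Matrix.one_apply, vecMulVec_apply]
          · have h5 : (5 : Fin 8) ≠ j := by omega
            have h6 : (6 : Fin 8) ≠ j := by omega
            have h7 : (7 : Fin 8) ≠ j := by omega
            simp [colIdx, Matrix.one_apply, vecMulVec_apply, hi, h5, h6, h7]
    have h1 := rank_add_le_add (vecMulVec (Pi.single 0 1) (E 0))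
        ((1 : Matrix (Fin 8) (Fin 8) k).submatrix id rowIdx *
          (E.submatrix rowIdx colIdx * (1 : Matrix (Fin 8) (Fin 8) k).submatrix colIdx id))
    rw [← e, hr] at h1
    have h2 := rank_vecMulVec_le (Pi.single 0 1 : Fin 8 → k) (E 0)
    have h3 := rank_mul_le_right ((1 : Matrix (Fin 8) (Fin 8) k).submatrix id rowIdx)
      (E.submatrix rowIdx colIdx * (1 : Matrix (Fin 8) (Fin 8) k).submatrix colIdx id)
    have h4 := rank_mul_le_left (E.submatrix rowIdx colIdx)
      ((1 : Matrix (Fin 8) (Fin 8) k).submatrix colIdx id)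
    omega

open Matrix in
lemma caseA {k : Type*} [Field k] [IsAlgClosed k] {r : ℕ}
    (D : Matrix (Fin 8) (Fin 8) (MvPolynomial (Fin r) k))
    (hsq : D * D = 0) (h0 : ∀ i j : Fin 8, eval (0 : Fin r → k) (D i j) = 0)
    (hr : ∀ a : Fin r → k, a ≠ 0 → (D.map (eval a)).rank = 4)
    (hz : ∀ i j : Fin 8, ¬((i = 0 ∧ 1 ≤ j) ∨ (1 ≤ i ∧ i ≤ 4 ∧ 5 ≤ j)) → D i j = 0) :
    r < 3 := by
  by_contra! h3
  have hb := fun a ha => blocks_of_rank (D.map (eval a))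
    (fun i j hij => by simp [hz i j hij]) (hr a ha)
  refine core_false h3 (D.submatrix rowIdx colIdx) (fun i => D 0 (rowIdx i)) ?_ (fun i => h0 _ _)
    (fun a ha => (hb a ha).1) (fun a ha => left_inverse_of_rank _ (hb a ha).2)
  ext1 j
  have hs := congrFun (congrFun hsq 0) (colIdx j)
  rw [Matrix.mul_apply, Fin.sum_univ_eight] at hs
  have z0 : D 0 0 = 0 := hz _ _ (by decide)
  have z5 : D 5 (colIdx j) = 0 := hz _ _ (by clear * -; revert j; decide)
  have z6 : D 6 (colIdx j) = 0 := hz _ _ (by clear * -; revert j; decide)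
  have z7 : D 7 (colIdx j) = 0 := hz _ _ (by clear * -; revert j; decide)
  rw [z0, z5, z6, z7] at hs
  simp only [vecMul, dotProduct, Fintype.sum_sum_type, Fin.sum_univ_three, Fin.sum_univ_one]
  simpa [rowIdx] using hs

theorem statement_10 {k : Type*} [Field k] [IsAlgClosed k] {r : ℕ}
    (D : Matrix (Fin 8) (Fin 8) (MvPolynomial (Fin r) k))
    (hstd : StandardConditions D)
    (hzero : (∀ i j : Fin 8,
        ¬((1 ≤ (i : ℕ) + 1 ∧ (i : ℕ) + 1 ≤ 1 ∧ 2 ≤ (j : ℕ) + 1 ∧ (j : ℕ) + 1 ≤ 8) ∨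
          (2 ≤ (i : ℕ) + 1 ∧ (i : ℕ) + 1 ≤ 5 ∧ 6 ≤ (j : ℕ) + 1 ∧ (j : ℕ) + 1 ≤ 8)) →
        D i j = 0) ∨
      (∀ i j : Fin 8,
        ¬((1 ≤ (i : ℕ) + 1 ∧ (i : ℕ) + 1 ≤ 3 ∧ 4 ≤ (j : ℕ) + 1 ∧ (j : ℕ) + 1 ≤ 8) ∨
          (4 ≤ (i : ℕ) + 1 ∧ (i : ℕ) + 1 ≤ 7 ∧ 8 ≤ (j : ℕ) + 1 ∧ (j : ℕ) + 1 ≤ 8)) →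
        D i j = 0)) :
    r < 3 := by
  obtain ⟨_, hsq, h0, hr, _⟩ := hstd
  rcases hzero with hz | hz
  · refine caseA D hsq h0 hr fun i j hij => hz i j ?_
    omega
  · refine caseA (D.submatrix Fin.revPerm Fin.revPerm).transpose ?_ (fun i j => h0 _ _) ?_ ?_
    · rw [← Matrix.transpose_mul, Matrix.submatrix_mul_equiv, hsq]
      simp
    · intro a ha
      rw [← hr a ha, ← Matrix.rank_transpose (D.map (eval a)),
        ← Matrix.rank_submatrix (D.map (eval a)).transpose Fin.revPerm Fin.revPerm]
      rfl
    · intro i j hij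
      simp only [Matrix.transpose_apply, Matrix.submatrix_apply, Fin.revPerm_apply]
      apply hz
      simp only [Fin.val_rev]
      omega
end

section
/- Let k be an algebraically closed field and S = k[x_1,...,x_r]. Suppose D = (p_{ij}) is an 8×8 matrix with entries in S satisfying the standard conditions, and suppose moreover that p_{ij} = 0 unless (1 ≤ i ≤ 2 and 3 ≤ j ≤ 8) or (3 ≤ i ≤ 6 and 7 ≤ j ≤ 8). Then r < 3, i.e., r ≤ 2. -/
open MvPolynomial

section
variable {k : Type*} [Field k] {r : ℕ}

lemma aux_nullst [IsAlgClosed k] (J : Ideal (MvPolynomial (Fin r) k))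
    (h : ∀ a : Fin r → k, a ≠ 0 → ∃ g ∈ J, eval a g ≠ 0) (i : Fin r) :
    ∃ N : ℕ, (X i) ^ N ∈ J := by
  have h1 : (X i : MvPolynomial (Fin r) k) ∈ J.radical := by
    rw [← vanishingIdeal_zeroLocus_eq_radical (K := k), mem_vanishingIdeal_iff]
    intro x hx
    have : x = 0 := by
      by_contra hne
      obtain ⟨g, hg, hg'⟩ := h x hne
      exact hg' (by simpa [aeval_eq_eval] using hx g hg)
    simp [this]
  exact h1

lemma aux_dvd {i j : Fin r} (hij : i ≠ j) (N M : ℕ) {z w : MvPolynomial (Fin r) k}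
    (h : X j ^ M * z = X i ^ N * w) : ∃ t, z = X i ^ N * t := by
  have hp : Prime (X i : MvPolynomial (Fin r) k) := X_prime
  refine hp.pow_dvd_of_dvd_mul_left N (a := X j ^ M) ?_ ⟨w, h⟩
  intro hd
  exact hij (X_dvd_X.mp (hp.dvd_of_dvd_pow hd))

lemma aux_reg {i j l : Fin r} (hil : i ≠ l) (hjl : j ≠ l) (N M L : ℕ)
    {c a b : MvPolynomial (Fin r) k}
    (h : X l ^ L * c = X i ^ N * a + X j ^ M * b) : ∃ p q, c = X j ^ M * p - X i ^ N * q := by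
  classical
  let s : Set (Fin r →₀ ℕ) := {Finsupp.single i N, Finsupp.single j M}
  have hs : ((fun s => monomial s (1 : k)) '' s) = {X i ^ N, X j ^ M} := by
    simp [s, Set.image_pair, X_pow_eq_monomial]
  have h1 : X l ^ L * c ∈ Ideal.span ((fun s => monomial s (1 : k)) '' s) := by
    rw [hs, Ideal.mem_span_pair]
    exact ⟨a, b, by rw [h]; ring⟩
  have h2 : c ∈ Ideal.span ((fun s => monomial s (1 : k)) '' s) := by
    rw [mem_ideal_span_monomial_image] at h1 ⊢
    intro m hm
    obtain ⟨t, ht, hle⟩ := h1 (Finsupp.single l L + m) (by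
      rw [mem_support_iff] at hm ⊢
      rw [X_pow_eq_monomial, coeff_monomial_mul]
      simpa using hm)
    refine ⟨t, ht, ?_⟩
    intro e
    have := hle e
    rcases ht with rfl | rfl
    · by_cases he : i = e
      · subst he
        simpa [Finsupp.single_apply, hil.symm] using this
      · simp [he]
    · by_cases he : j = e
      · subst he
        simpa [Finsupp.single_apply, hjl.symm] using this
      · simp [he]
  rw [hs, Ideal.mem_span_pair] at h2
  obtain ⟨p, q, hpq⟩ := h2
  exact ⟨q, -p, by rw [← hpq]; ring⟩

lemma aux_zero [Infinite k] (i : Fin r) {p : MvPolynomial (Fin r) k}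
    (h : ∀ a : Fin r → k, a ≠ 0 → eval a p = 0) : p = 0 := by
  have : X i * p = 0 := by
    apply MvPolynomial.funext
    intro a
    by_cases ha : a = 0
    · simp [ha]
    · simp [h a ha]
  exact (mul_eq_zero.mp this).resolve_left (X_ne_zero i)

lemma aux_rank_add {m n : Type*} [Fintype m] [Fintype n] (P Q : Matrix m n k) :
    (P + Q).rank ≤ P.rank + Q.rank := by
  unfold Matrix.rank
  rw [Matrix.mulVecLin_add]
  refine (Submodule.finrank_mono (?_ : _ ≤ LinearMap.range P.mulVecLin ⊔ LinearMap.range Q.mulVecLin)).trans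
    (Submodule.finrank_add_le_finrank_add_finrank _ _)
  rintro _ ⟨x, rfl⟩
  exact Submodule.add_mem_sup ⟨x, rfl⟩ ⟨x, rfl⟩

lemma aux_right_inv {n : ℕ} (P : Matrix (Fin 2) (Fin n) k) (h : 2 ≤ P.rank) :
    ∃ R : Matrix (Fin n) (Fin 2) k, P * R = 1 := by
  rw [← Matrix.mulVec_surjective_iff_exists_right_inverse]
  have : LinearMap.range P.mulVecLin = ⊤ := by
    apply Submodule.eq_top_of_finrank_eq
    have h2 := P.rank_le_height
    unfold Matrix.rank at h h2
    simp
    omega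
  exact LinearMap.range_eq_top.mp this

lemma aux_left_inv {n : ℕ} (P : Matrix (Fin n) (Fin 2) k) (h : 2 ≤ P.rank) :
    ∃ R : Matrix (Fin 2) (Fin n) k, R * P = 1 := by
  obtain ⟨R, hR⟩ := aux_right_inv P.transpose (by rwa [Matrix.rank_transpose])
  refine ⟨R.transpose, ?_⟩
  rw [← Matrix.transpose_inj, Matrix.transpose_mul]
  simpa using hR

lemma aux_exact (P : Matrix (Fin 2) (Fin 4) k) (Q : Matrix (Fin 4) (Fin 2) k)
    (hP : 2 ≤ P.rank) (hQ : 2 ≤ Q.rank) (hPQ : P * Q = 0) (y : Fin 4 → k)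
    (hy : P.mulVec y = 0) : ∃ z, Q.mulVec z = y := by
  have hle : LinearMap.range Q.mulVecLin ≤ LinearMap.ker P.mulVecLin := by
    rintro _ ⟨z, rfl⟩
    simp [Matrix.mulVec_mulVec, hPQ]
  have hrn := LinearMap.finrank_range_add_finrank_ker P.mulVecLin
  have heq := Submodule.eq_of_le_of_finrank_le hle (by
    unfold Matrix.rank at hP hQ
    simp at hrn
    omega)
  have : y ∈ LinearMap.range Q.mulVecLin := by
    rw [heq]; simpa using hy
  exact this

/-- evaluation of a matrix-vector product -/
lemma aux_eval_mulVec {m n : ℕ} (P : Matrix (Fin m) (Fin n) (MvPolynomial (Fin r) k))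
    (y : Fin n → MvPolynomial (Fin r) k) (a : Fin r → k) (i : Fin m) :
    eval a (P.mulVec y i) = ((P.map (eval a)).mulVec (fun j => eval a (y j))) i := by
  simp [Matrix.mulVec, dotProduct]

/-- Core: no complex `S² → S⁴ → S²`, minimal and exact off the origin, when `r ≥ 3`. -/
lemma aux_core [IsAlgClosed k] (hr : 3 ≤ r)
    (A : Matrix (Fin 2) (Fin 4) (MvPolynomial (Fin r) k))
    (B : Matrix (Fin 4) (Fin 2) (MvPolynomial (Fin r) k))
    (hAB : A * B = 0)
    (hA0 : ∀ i j, eval (0 : Fin r → k) (A i j) = 0)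
    (hA : ∀ a : Fin r → k, a ≠ 0 → 2 ≤ (A.map (eval a)).rank)
    (hB : ∀ a : Fin r → k, a ≠ 0 → 2 ≤ (B.map (eval a)).rank) : False := by
  have : Infinite k := IsAlgClosed.instInfinite
  let i1 : Fin r := ⟨0, by omega⟩
  let i2 : Fin r := ⟨1, by omega⟩
  let i3 : Fin r := ⟨2, by omega⟩
  have h12 : i1 ≠ i2 := by simp [i1, i2]
  have h13 : i1 ≠ i3 := by simp [i1, i3]
  have h23 : i2 ≠ i3 := by simp [i2, i3]
  -- injectivity of B
  have hinj : ∀ z, B.mulVec z = 0 → z = 0 := by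
    intro z hz
    funext j
    apply aux_zero i1
    intro a ha
    obtain ⟨L, hL⟩ := aux_left_inv _ (hB a ha)
    have h1 : (B.map (eval a)).mulVec (fun j => eval a (z j)) = 0 := by
      funext i
      rw [← aux_eval_mulVec, hz]; simp
    have h2 : (L * B.map (eval a)).mulVec (fun j => eval a (z j)) = 0 := by
      rw [← Matrix.mulVec_mulVec, h1, Matrix.mulVec_zero]
    rw [hL, Matrix.one_mulVec] at h2
    exact congrFun h2 j
  -- images absorb powers
  have hsurj : ∀ (v : Fin 2 → MvPolynomial (Fin r) k) (i : Fin r),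
      ∃ (N : ℕ) (y : Fin 4 → MvPolynomial (Fin r) k), (X i ^ N : MvPolynomial (Fin r) k) • v = A.mulVec y := by
    intro v i
    let J : Ideal (MvPolynomial (Fin r) k) :=
      (LinearMap.range A.mulVecLin).comap (LinearMap.toSpanSingleton _ _ v)
    obtain ⟨N, hN⟩ := aux_nullst J (by
      intro a ha
      obtain ⟨R, hR⟩ := aux_right_inv _ (hA a ha)
      obtain ⟨R', hR'⟩ : ∃ R' : Matrix (Fin 4) (Fin 2) (MvPolynomial (Fin r) k),
          R'.map (eval a) = R := ⟨R.map C, by ext; simp⟩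
      refine ⟨(A * R').det, ?_, ?_⟩
      · refine ⟨(R' * (A * R').adjugate).mulVec v, ?_⟩
        simp only [Matrix.mulVecLin_apply, LinearMap.toSpanSingleton_apply]
        rw [Matrix.mulVec_mulVec, ← Matrix.mul_assoc, Matrix.mul_adjugate, Matrix.smul_mulVec,
          Matrix.one_mulVec]
      · rw [RingHom.map_det, RingHom.mapMatrix_apply, Matrix.map_mul, hR', hR]; simp) i
    obtain ⟨y, hy⟩ := hN
    exact ⟨N, y, by simpa using hy.symm⟩
  -- exactness in the middle
  have hex : ∀ y, A.mulVec y = 0 → ∃ z, B.mulVec z = y := by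
    intro y hy
    let J : Ideal (MvPolynomial (Fin r) k) :=
      (LinearMap.range B.mulVecLin).comap (LinearMap.toSpanSingleton _ _ y)
    have hJ := aux_nullst J (by
      intro a ha
      obtain ⟨L, hL⟩ := aux_left_inv _ (hB a ha)
      obtain ⟨L', hL'⟩ : ∃ L' : Matrix (Fin 2) (Fin 4) (MvPolynomial (Fin r) k),
          ∀ b, L'.map (eval b) = L := ⟨L.map C, fun b => by ext; simp⟩
      refine ⟨(L' * B).det, ?_, ?_⟩
      · refine ⟨((L' * B).adjugate * L').mulVec y, ?_⟩
        simp only [Matrix.mulVecLin_apply, LinearMap.toSpanSingleton_apply]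
        funext j
        rw [← sub_eq_zero]
        apply aux_zero i1
        intro b hb
        have hAy : (A.map (eval b)).mulVec (fun j => eval b (y j)) = 0 := by
          funext i
          rw [← aux_eval_mulVec, hy]; simp
        obtain ⟨ζ, hζ⟩ := aux_exact (A.map (eval b)) (B.map (eval b)) (hA b hb) (hB b hb)
          (by rw [← Matrix.map_mul, hAB]; ext; simp) _ hAy
        have hLm : L'.map (eval b) = L := hL' b
        have hadj : (L' * B).adjugate.map (eval b) = (L * B.map (eval b)).adjugate := by
          have := RingHom.map_adjugate (eval b) (L' * B)
          rw [RingHom.mapMatrix_apply, RingHom.mapMatrix_apply, Matrix.map_mul, hLm] at this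
          exact this
        have hdet : eval b (L' * B).det = (L * B.map (eval b)).det := by
          rw [RingHom.map_det, RingHom.mapMatrix_apply, Matrix.map_mul, hLm]
        rw [map_sub, Matrix.mulVec_mulVec, aux_eval_mulVec, Matrix.map_mul, Matrix.map_mul,
          hadj, hLm, ← hζ, Pi.smul_apply, smul_eq_mul, map_mul, hdet]
        have hyj : eval b (y j) = (B.map (eval b)).mulVec ζ j := (congrFun hζ j).symm
        rw [hyj, Matrix.mulVec_mulVec, Matrix.mul_assoc, Matrix.mul_assoc, Matrix.adjugate_mul]
        simp [Matrix.smul_mulVec]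
      · rw [RingHom.map_det, RingHom.mapMatrix_apply, Matrix.map_mul, hL', hL]; simp)
    obtain ⟨N, z, hz⟩ := hJ i1
    obtain ⟨M, w, hw⟩ := hJ i2
    simp only [Matrix.mulVecLin_apply, LinearMap.toSpanSingleton_apply] at hz hw
    have h0 : (X i2 ^ M : MvPolynomial (Fin r) k) • z - (X i1 ^ N : MvPolynomial (Fin r) k) • w = 0 := by
      apply hinj
      rw [Matrix.mulVec_sub, Matrix.mulVec_smul, Matrix.mulVec_smul, hz, hw, smul_comm, sub_self]
    have h1 : ∀ j, ∃ t, z j = X i1 ^ N * t := fun j =>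
      aux_dvd h12 N M (w := w j) (by
        have := congrFun (sub_eq_zero.mp h0) j
        simpa using this)
    choose t ht using h1
    refine ⟨t, ?_⟩
    have hz' : z = (X i1 ^ N : MvPolynomial (Fin r) k) • t := by funext j; simp [ht j]
    rw [hz', Matrix.mulVec_smul] at hz
    exact smul_right_injective _ (pow_ne_zero N (X_ne_zero i1)) hz
  -- the Koszul argument
  obtain ⟨N1, y1, e1⟩ := hsurj (Pi.single 0 1) i1
  obtain ⟨N2, y2, e2⟩ := hsurj (Pi.single 0 1) i2
  obtain ⟨N3, y3, e3⟩ := hsurj (Pi.single 0 1) i3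
  have hpair : ∀ (p q : MvPolynomial (Fin r) k) (y y' : Fin 4 → MvPolynomial (Fin r) k)
      (v : Fin 2 → MvPolynomial (Fin r) k), p • v = A.mulVec y → q • v = A.mulVec y' →
      ∃ z, B.mulVec z = q • y - p • y' := by
    intro p q y y' v h h'
    apply hex
    rw [Matrix.mulVec_sub, Matrix.mulVec_smul, Matrix.mulVec_smul, ← h, ← h', smul_comm, sub_self]
  obtain ⟨z12, hz12⟩ := hpair _ _ _ _ _ e1 e2
  obtain ⟨z13, hz13⟩ := hpair _ _ _ _ _ e1 e3
  obtain ⟨z23, hz23⟩ := hpair _ _ _ _ _ e2 e3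
  have hrel : (X i3 ^ N3 : MvPolynomial (Fin r) k) • z12 - (X i2 ^ N2 : MvPolynomial (Fin r) k) • z13 + (X i1 ^ N1 : MvPolynomial (Fin r) k) • z23 = 0 := by
    apply hinj
    rw [Matrix.mulVec_add, Matrix.mulVec_sub, Matrix.mulVec_smul, Matrix.mulVec_smul,
      Matrix.mulVec_smul, hz12, hz13, hz23]
    funext j
    simp
    ring
  have hw : ∀ j, ∃ p q, z12 j = X i2 ^ N2 * p - X i1 ^ N1 * q := fun j =>
    aux_reg h13 h23 N1 N2 N3 (a := - z23 j) (b := z13 j) (by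
      have := congrFun hrel j
      simp at this
      linear_combination this)
  choose w1 w2 hw using hw
  have hz' : z12 = (X i2 ^ N2 : MvPolynomial (Fin r) k) • w1 - (X i1 ^ N1 : MvPolynomial (Fin r) k) • w2 := by funext j; simp [hw j]
  rw [hz', Matrix.mulVec_sub, Matrix.mulVec_smul, Matrix.mulVec_smul] at hz12
  have ht : ∀ j, ∃ t, (y1 - B.mulVec w1) j = X i1 ^ N1 * t := fun j =>
    aux_dvd h12 N1 N2 (w := (y2 - B.mulVec w2) j) (by
      have := congrFun hz12 j
      simp at this ⊢
      linear_combination -this)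
  choose t ht using ht
  have ht' : y1 = B.mulVec w1 + (X i1 ^ N1 : MvPolynomial (Fin r) k) • t := by
    funext j
    have := ht j
    simp at this ⊢
    linear_combination this
  rw [ht', Matrix.mulVec_add, Matrix.mulVec_mulVec, hAB, Matrix.zero_mulVec, zero_add,
    Matrix.mulVec_smul] at e1
  have e1' := smul_right_injective _ (pow_ne_zero N1 (X_ne_zero i1)) e1
  have e := congrArg (eval (0 : Fin r → k)) (congrFun e1' 0)
  rw [aux_eval_mulVec] at e
  have hA0' : A.map (eval (0 : Fin r → k)) = 0 := by ext1 i j; exact hA0 i j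
  rw [hA0'] at e
  simp at e

end

theorem statement_11 {k : Type*} [Field k] [IsAlgClosed k] {r : ℕ}
    (D : Matrix (Fin 8) (Fin 8) (MvPolynomial (Fin r) k))
    (hstd : StandardConditions D)
    (hzero : ∀ i j : Fin 8,
        ¬((1 ≤ (i : ℕ) + 1 ∧ (i : ℕ) + 1 ≤ 2 ∧ 3 ≤ (j : ℕ) + 1 ∧ (j : ℕ) + 1 ≤ 8) ∨
          (3 ≤ (i : ℕ) + 1 ∧ (i : ℕ) + 1 ≤ 6 ∧ 7 ≤ (j : ℕ) + 1 ∧ (j : ℕ) + 1 ≤ 8)) →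
        D i j = 0) :
    r < 3 := by
  by_contra hr
  obtain ⟨-, hsq, h0, hrk, -⟩ := hstd
  let f : Fin 2 → Fin 8 := ![0, 1]
  let g : Fin 4 → Fin 8 := ![2, 3, 4, 5]
  let h : Fin 2 → Fin 8 := ![6, 7]
  have hfz : ∀ i j : Fin 8, (2 ≤ i ∨ j ≤ 1) → (i ≤ 1 ∨ 6 ≤ i ∨ j ≤ 5) → D i j = 0 := by
    intro i j h1 h2
    apply hzero
    simp only [Fin.le_def] at h1 h2
    simp at h1 h2
    omega
  refine aux_core (by omega) (D.submatrix f g) (D.submatrix g h) ?_ (fun i j => h0 _ _) ?_ ?_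
  · ext1 i j
    have := congrFun (congrFun hsq (f i)) (h j)
    rw [Matrix.mul_apply, Fin.sum_univ_eight] at this
    rw [Matrix.mul_apply, Fin.sum_univ_four]
    simp only [Matrix.submatrix_apply]
    have a0 : D (f i) 0 = 0 := hfz _ _ (by simp) (by fin_cases i <;> simp [f])
    have a1 : D (f i) 1 = 0 := hfz _ _ (by simp) (by fin_cases i <;> simp [f])
    have a6 : D 6 (h j) = 0 := hfz _ _ (Or.inl (by decide)) (Or.inr (Or.inl (by decide)))
    have a7 : D 7 (h j) = 0 := hfz _ _ (Or.inl (by decide)) (Or.inr (Or.inl (by decide)))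
    rw [a0, a1, a6, a7] at this
    simpa [g] using this
  · intro a ha
    have hk := hrk a ha
    set E := D.map (eval a) with hE
    have hEz : ∀ i j : Fin 8, (2 ≤ i ∨ j ≤ 1) → (i ≤ 1 ∨ 6 ≤ i ∨ j ≤ 5) → E i j = 0 := by
      intro i j h1 h2
      simp [hE, hfz i j h1 h2]
    have hdec : E = (1 : Matrix (Fin 8) (Fin 8) k).submatrix id f * E.submatrix f g *
          (1 : Matrix (Fin 8) (Fin 8) k).submatrix g id
        + E.submatrix id h * (1 : Matrix (Fin 8) (Fin 8) k).submatrix h id := by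
      ext i j
      simp only [Matrix.add_apply, Matrix.mul_apply, Matrix.submatrix_apply, Fin.sum_univ_two,
        Fin.sum_univ_four, Matrix.one_apply, id]
      fin_cases i <;> fin_cases j <;> simp [f, g, h] <;>
        (refine hEz _ _ ?_ ?_ <;> decide)
    have hb1 := aux_rank_add ((1 : Matrix (Fin 8) (Fin 8) k).submatrix id f * E.submatrix f g *
          (1 : Matrix (Fin 8) (Fin 8) k).submatrix g id)
        (E.submatrix id h * (1 : Matrix (Fin 8) (Fin 8) k).submatrix h id)
    rw [← hdec, hk] at hb1
    have hb2 := (Matrix.rank_mul_le_left ((1 : Matrix (Fin 8) (Fin 8) k).submatrix id f *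
      E.submatrix f g) ((1 : Matrix (Fin 8) (Fin 8) k).submatrix g id)).trans
      (Matrix.rank_mul_le_right _ _)
    have hb3 := (Matrix.rank_mul_le_left (E.submatrix id h)
      ((1 : Matrix (Fin 8) (Fin 8) k).submatrix h id)).trans (Matrix.rank_le_width _)
    have : 2 ≤ (E.submatrix f g).rank := by omega
    exact this
  · intro a ha
    have hk := hrk a ha
    set E := D.map (eval a) with hE
    have hEz : ∀ i j : Fin 8, (2 ≤ i ∨ j ≤ 1) → (i ≤ 1 ∨ 6 ≤ i ∨ j ≤ 5) → E i j = 0 := by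
      intro i j h1 h2
      simp [hE, hfz i j h1 h2]
    have hdec : E = (1 : Matrix (Fin 8) (Fin 8) k).submatrix id g * E.submatrix g h *
          (1 : Matrix (Fin 8) (Fin 8) k).submatrix h id
        + (1 : Matrix (Fin 8) (Fin 8) k).submatrix id f * E.submatrix f id := by
      ext i j
      simp only [Matrix.add_apply, Matrix.mul_apply, Matrix.submatrix_apply, Fin.sum_univ_two,
        Fin.sum_univ_four, Matrix.one_apply, id]
      fin_cases i <;> fin_cases j <;> simp [f, g, h] <;>
        (refine hEz _ _ ?_ ?_ <;> decide)
    have hb1 := aux_rank_add ((1 : Matrix (Fin 8) (Fin 8) k).submatrix id g * E.submatrix g h *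
          (1 : Matrix (Fin 8) (Fin 8) k).submatrix h id)
        ((1 : Matrix (Fin 8) (Fin 8) k).submatrix id f * E.submatrix f id)
    rw [← hdec, hk] at hb1
    have hb2 := (Matrix.rank_mul_le_left ((1 : Matrix (Fin 8) (Fin 8) k).submatrix id g *
      E.submatrix g h) ((1 : Matrix (Fin 8) (Fin 8) k).submatrix h id)).trans
      (Matrix.rank_mul_le_right _ _)
    have hb3 := (Matrix.rank_mul_le_left ((1 : Matrix (Fin 8) (Fin 8) k).submatrix id f)
      (E.submatrix f id)).trans (Matrix.rank_le_width _)
    have : 2 ≤ (E.submatrix g h).rank := by omega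
    exact this
end
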